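/- For all integers d, k with 1 ≤ k ≤ d, the growth constant of (d,k)-self-avoiding manifolds satisfies the lower bound liminf_{n→∞} (c^SAM_{(d,k),n})^{1/n} ≥ k(d−k+1). -/

import Mathlib

/-!
Give a face the sum of the coordinates of its base vertex as height. An ascent replaces a face
`(S, v)` by the adjacent face `((S \ {i}) ∪ {j}, v + e_i)` with `i ∈ S` and `j ∉ S \ {i}`; each
`k`-face has exactly `k(d - k + 1)` of them. As heights increase by one along an ascent, the faces
of a staircase of ascents are determined by their heights. Hence at most two of them share an edge,
whose height exceeds theirs by zero or one, and the staircase, as well as the translation relating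
two staircases, can be read off the set of its faces. This gives `(k(d - k + 1))^n` manifolds of
area `n + 1`.

The real-valued `liminf` carries no information unless the sequence is bounded, so an exponential
upper bound is needed too: a connected set of `n + 1` faces is the set of faces visited by a walk
with `2n` steps, each of which has at most `6^d` possible continuations.
-/

open Filter

/-- A `k`-face of the hypercubic lattice `ℤ^d`: an orientation set `S ⊆ {1,…,d}`
together with a base vertex `v ∈ ℤ^d`. -/
abbrev Face (d : ℕ) := Finset (Fin d) × (Fin d → ℤ)

/-- The boundary `(k-1)`-edges of a `k`-face `(S, v)`: the `(k-1)`-faces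
`(S \ {i}, v)` and `(S \ {i}, v + e_i)` for `i ∈ S`. -/
def faceEdges {d : ℕ} (f : Face d) : Finset (Face d) :=
  f.1.biUnion fun i =>
    {(f.1.erase i, f.2), (f.1.erase i, f.2 + Pi.single i 1)}

/-- Two faces are adjacent if they are distinct and share a common boundary edge. -/
def FaceAdj {d : ℕ} (f g : Face d) : Prop :=
  f ≠ g ∧ ∃ e, e ∈ faceEdges f ∧ e ∈ faceEdges g

/-- A set of faces is connected with respect to adjacency. -/
def ConnectedFaces {d : ℕ} (M : Finset (Face d)) : Prop :=
  ∀ f ∈ M, ∀ g ∈ M, Relation.ReflTransGen (fun a b => a ∈ M ∧ b ∈ M ∧ FaceAdj a b) f g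

/-- A `(d,k)`-self-avoiding manifold of `k`-area `n`: a connected set of `n` `k`-faces
such that every `(k-1)`-edge bounds at most two of its `k`-faces. -/
def IsSAM (d k n : ℕ) (M : Finset (Face d)) : Prop :=
  M.card = n ∧ (∀ f ∈ M, f.1.card = k) ∧ ConnectedFaces M ∧
    ∀ e : Face d, (M.filter fun f => e ∈ faceEdges f).card ≤ 2

/-- A closed `(d,k)`-self-avoiding manifold: every boundary edge of every face
is shared by exactly two faces. -/
def IsClosedSAM (d k n : ℕ) (M : Finset (Face d)) : Prop :=
  IsSAM d k n M ∧ ∀ f ∈ M, ∀ e ∈ faceEdges f,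
    (M.filter fun g => e ∈ faceEdges g).card = 2

/-- A `(d,k)`-fixed polyominoid of `k`-area `n`: a connected set of `n` `k`-faces. -/
def IsXD (d k n : ℕ) (M : Finset (Face d)) : Prop :=
  M.card = n ∧ (∀ f ∈ M, f.1.card = k) ∧ ConnectedFaces M

/-- Translation of a face by a lattice vector. -/
def translateFace {d : ℕ} (t : Fin d → ℤ) (f : Face d) : Face d := (f.1, f.2 + t)

/-- Two sets of faces are translation-equivalent. -/
def TransEquiv {d : ℕ} (A B : Finset (Face d)) : Prop :=
  ∃ t : Fin d → ℤ, A.image (translateFace t) = B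

/-- The number of `(d,k)`-self-avoiding manifolds of `k`-area `n`, up to translation. -/
noncomputable def samCount (d k n : ℕ) : ℕ :=
  Nat.card (Quot fun A B : {M : Finset (Face d) // IsSAM d k n M} =>
    TransEquiv A.val B.val)

/-- The number of closed `(d,k)`-self-avoiding manifolds of `k`-area `n`, up to
translation. -/
noncomputable def closedSamCount (d k n : ℕ) : ℕ :=
  Nat.card (Quot fun A B : {M : Finset (Face d) // IsClosedSAM d k n M} =>
    TransEquiv A.val B.val)

/-- The number of `(d,k)`-fixed polyominoids of `k`-area `n`, up to translation. -/
noncomputable def xdCount (d k n : ℕ) : ℕ :=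
  Nat.card (Quot fun A B : {M : Finset (Face d) // IsXD d k n M} =>
    TransEquiv A.val B.val)

theorem exists_rel_mem_notMem_of_reflTransGen {α : Type*} {r : α → α → Prop} {s : Set α} {a b : α}
    (h : Relation.ReflTransGen r a b) (ha : a ∈ s) (hb : b ∉ s) : ∃ x ∈ s, ∃ y ∉ s, r x y := by
  induction h with
  | refl => exact absurd ha hb
  | @tail x y _ hxy ih =>
    by_cases hx : x ∈ s
    · exact ⟨x, hx, y, hb, hxy⟩
    · exact ih hx

section WalkSupports

variable {α : Type*} [DecidableEq α] {next : α → Finset α} {m n : ℕ} {a b c : α} {M : Finset α}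

/-- The vertex sets of the walks with `n` steps from `a` in the directed graph with an edge from
`x` to each member of `next x`. Both staircases and the walks that exhaust a connected set of faces
are counted through them. -/
def walkSupports (next : α → Finset α) : ℕ → α → Finset (Finset α)
  | 0, a => {{a}}
  | n + 1, a => (next a).biUnion fun b => (walkSupports next n b).image (insert a)

theorem mem_walkSupports_zero : M ∈ walkSupports next 0 a ↔ M = {a} := by
  simp [walkSupports]

theorem mem_walkSupports_succ :
    M ∈ walkSupports next (n + 1) a ↔
      ∃ b ∈ next a, ∃ N ∈ walkSupports next n b, insert a N = M := by
  simp [walkSupports]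

theorem start_mem_of_mem_walkSupports (hM : M ∈ walkSupports next n a) : a ∈ M := by
  cases n with
  | zero => simp [mem_walkSupports_zero.1 hM]
  | succ n =>
    obtain ⟨b, -, N, -, rfl⟩ := mem_walkSupports_succ.1 hM
    exact Finset.mem_insert_self a N

theorem subset_of_mem_walkSupports {s : Set α} (hs : ∀ x ∈ s, ∀ y ∈ next x, y ∈ s) (ha : a ∈ s)
    (hM : M ∈ walkSupports next n a) : ↑M ⊆ s := by
  induction n generalizing a M with
  | zero => simpa [mem_walkSupports_zero.1 hM] using ha
  | succ n ih =>
    obtain ⟨b, hb, N, hN, rfl⟩ := mem_walkSupports_succ.1 hM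
    rw [Finset.coe_insert]
    exact Set.insert_subset ha (ih (hs a ha b hb) hN)

theorem reflTransGen_of_mem_walkSupports (hM : M ∈ walkSupports next n a) (hb : b ∈ M) :
    Relation.ReflTransGen (fun x y => x ∈ M ∧ y ∈ M ∧ y ∈ next x) a b := by
  induction n generalizing a M with
  | zero =>
    obtain rfl := mem_walkSupports_zero.1 hM
    rw [Finset.mem_singleton.1 hb]
  | succ n ih =>
    obtain ⟨c, hc, N, hN, rfl⟩ := mem_walkSupports_succ.1 hM
    obtain rfl | hbN := Finset.mem_insert.1 hb
    · exact .refl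
    · have hsub : N ⊆ insert a N := Finset.subset_insert a N
      have hac : a ∈ insert a N ∧ c ∈ insert a N ∧ c ∈ next a :=
        ⟨Finset.mem_insert_self a N, hsub (start_mem_of_mem_walkSupports hN), hc⟩
      exact .head hac <| Relation.ReflTransGen.mono
        (fun x y ⟨hx, hy, hxy⟩ => ⟨hsub hx, hsub hy, hxy⟩) _ _ (ih hN hbN)

theorem card_walkSupports_le {D : ℕ} (hD : ∀ x, (next x).card ≤ D) (n : ℕ) (a : α) :
    (walkSupports next n a).card ≤ D ^ n := by
  induction n generalizing a with
  | zero => simp [walkSupports]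
  | succ n ih =>
    calc (walkSupports next (n + 1) a).card
        ≤ (next a).card * D ^ n :=
          Finset.card_biUnion_le_card_mul _ _ _ fun b _ => Finset.card_image_le.trans (ih b)
      _ ≤ D ^ (n + 1) := by
          rw [pow_succ']
          exact Nat.mul_le_mul_right _ (hD a)

section Exhaustion

/-- To collect `c`, the walk makes a detour from `b` to `c` and back. -/
theorem insert_mem_walkSupports_add_two (hM : M ∈ walkSupports next n a) (hb : b ∈ M)
    (hbc : c ∈ next b) (hcb : b ∈ next c) : insert c M ∈ walkSupports next (n + 2) a := by
  have detour {n : ℕ} {M : Finset α} (hM : M ∈ walkSupports next n b) :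
      insert c M ∈ walkSupports next (n + 2) b := by
    refine mem_walkSupports_succ.2
      ⟨c, hbc, insert c M, mem_walkSupports_succ.2 ⟨b, hcb, M, hM, rfl⟩, ?_⟩
    exact Finset.insert_eq_of_mem (Finset.mem_insert_of_mem (start_mem_of_mem_walkSupports hM))
  induction n generalizing a M with
  | zero =>
    obtain rfl := mem_walkSupports_zero.1 hM
    obtain rfl := Finset.mem_singleton.1 hb
    exact detour hM
  | succ n ih =>
    obtain ⟨x, hx, N, hN, rfl⟩ := mem_walkSupports_succ.1 hM
    obtain rfl | hbN := Finset.mem_insert.1 hb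
    · exact detour hM
    · exact mem_walkSupports_succ.2 ⟨x, hx, insert c N, ih hN hbN, Finset.insert_comm a c N⟩

theorem exists_subset_mem_walkSupports (hsymm : ∀ x y, y ∈ next x → x ∈ next y) (ha : a ∈ M)
    (hconn : ∀ b ∈ M, Relation.ReflTransGen (fun x y => x ∈ M ∧ y ∈ M ∧ y ∈ next x) a b)
    (hm : m < M.card) : ∃ N ⊆ M, N.card = m + 1 ∧ N ∈ walkSupports next (2 * m) a := by
  induction m with
  | zero =>
    exact ⟨{a}, Finset.singleton_subset_iff.2 ha, rfl, mem_walkSupports_zero.2 rfl⟩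
  | succ m ih =>
    obtain ⟨N, hNM, hcard, hN⟩ := ih (by omega)
    obtain ⟨b, hbM, hbN⟩ : ∃ b ∈ M, b ∉ N := Finset.exists_mem_notMem_of_card_lt_card (by omega)
    obtain ⟨x, hxN, y, hyN, -, hyM, hxy⟩ :=
      exists_rel_mem_notMem_of_reflTransGen (s := N) (hconn b hbM)
        (start_mem_of_mem_walkSupports hN) hbN
    have hcard' : (insert y N).card = m + 1 + 1 := by
      rw [Finset.card_insert_of_notMem hyN, hcard]
    exact ⟨insert y N, Finset.insert_subset hyM hNM, hcard',
      insert_mem_walkSupports_add_two hN hxN hxy (hsymm x y hxy)⟩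

theorem mem_walkSupports_of_connected (hsymm : ∀ x y, y ∈ next x → x ∈ next y) (ha : a ∈ M)
    (hconn : ∀ b ∈ M, Relation.ReflTransGen (fun x y => x ∈ M ∧ y ∈ M ∧ y ∈ next x) a b)
    (hcard : M.card = n + 1) : M ∈ walkSupports next (2 * n) a := by
  obtain ⟨N, hNM, hNcard, hN⟩ := exists_subset_mem_walkSupports hsymm ha hconn (m := n) (by omega)
  rwa [← Finset.eq_of_subset_of_card_le hNM (by omega)]

end Exhaustion

section Graded

variable {β : Type*} [Preorder β] {h : α → β} (hlt : ∀ x, ∀ y ∈ next x, h x < h y)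
include hlt

theorem eq_or_lt_of_mem_walkSupports (hM : M ∈ walkSupports next n a) (hb : b ∈ M) :
    b = a ∨ h a < h b := by
  induction n generalizing a M with
  | zero =>
    obtain rfl := mem_walkSupports_zero.1 hM
    exact .inl (Finset.mem_singleton.1 hb)
  | succ n ih =>
    obtain ⟨c, hc, N, hN, rfl⟩ := mem_walkSupports_succ.1 hM
    refine (Finset.mem_insert.1 hb).imp_right fun hbN => ?_
    obtain rfl | hcb := ih hN hbN
    · exact hlt a b hc
    · exact (hlt a c hc).trans hcb

theorem start_unique_of_mem_walkSupports (hMa : M ∈ walkSupports next m a)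
    (hMb : M ∈ walkSupports next n b) : a = b := by
  obtain hab | hba := eq_or_lt_of_mem_walkSupports hlt hMb (start_mem_of_mem_walkSupports hMa)
  · exact hab
  obtain hba' | hab := eq_or_lt_of_mem_walkSupports hlt hMa (start_mem_of_mem_walkSupports hMb)
  · exact hba'.symm
  · exact absurd hab hba.asymm

theorem lt_of_mem_walkSupports_next (hb : b ∈ next a) (hM : M ∈ walkSupports next n b)
    (hc : c ∈ M) : h a < h c := by
  obtain rfl | hbc := eq_or_lt_of_mem_walkSupports hlt hM hc
  · exact hlt a c hb
  · exact (hlt a b hb).trans hbc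

theorem notMem_of_mem_walkSupports_next (hb : b ∈ next a) (hM : M ∈ walkSupports next n b) :
    a ∉ M :=
  fun ha => lt_irrefl _ (lt_of_mem_walkSupports_next hlt hb hM ha)

theorem card_of_mem_walkSupports (hM : M ∈ walkSupports next n a) : M.card = n + 1 := by
  induction n generalizing a M with
  | zero => simp [mem_walkSupports_zero.1 hM]
  | succ n ih =>
    obtain ⟨b, hb, N, hN, rfl⟩ := mem_walkSupports_succ.1 hM
    rw [Finset.card_insert_of_notMem (notMem_of_mem_walkSupports_next hlt hb hN), ih hN]

theorem injOn_of_mem_walkSupports (hM : M ∈ walkSupports next n a) : Set.InjOn h M := by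
  induction n generalizing a M with
  | zero => simp [mem_walkSupports_zero.1 hM]
  | succ n ih =>
    obtain ⟨b, hb, N, hN, rfl⟩ := mem_walkSupports_succ.1 hM
    have ha_image : h a ∉ h '' N := by
      rintro ⟨c, hc, hca⟩
      exact (lt_of_mem_walkSupports_next hlt hb hN hc).ne' hca
    rw [Finset.coe_insert, Set.injOn_insert (notMem_of_mem_walkSupports_next hlt hb hN)]
    exact ⟨ih hN, ha_image⟩

theorem pow_le_card_walkSupports {s : Set α} {K : ℕ} (hs : ∀ x ∈ s, ∀ y ∈ next x, y ∈ s)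
    (hK : ∀ x ∈ s, K ≤ (next x).card) (ha : a ∈ s) : K ^ n ≤ (walkSupports next n a).card := by
  induction n generalizing a with
  | zero => simp [walkSupports]
  | succ n ih =>
    have erase_start {b : α} (hb : b ∈ next a) {N : Finset α} (hN : N ∈ walkSupports next n b) :
        (insert a N).erase a = N :=
      Finset.erase_insert (notMem_of_mem_walkSupports_next hlt hb hN)
    have hdisj : (next a : Set α).PairwiseDisjoint
        fun b => (walkSupports next n b).image (insert a) := by
      intro b hb c hc hbc
      refine Finset.disjoint_left.2 fun M hMb hMc => hbc ?_
      obtain ⟨N, hN, rfl⟩ := Finset.mem_image.1 hMb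
      obtain ⟨N', hN', hNN'⟩ := Finset.mem_image.1 hMc
      have hN_eq : N' = N := by rw [← erase_start hc hN', hNN', erase_start hb hN]
      exact start_unique_of_mem_walkSupports hlt hN (hN_eq ▸ hN')
    have hinj {b : α} (hb : b ∈ next a) :
        Set.InjOn (insert a) (walkSupports next n b : Set (Finset α)) := by
      intro N hN N' hN' hNN'
      rw [← erase_start hb hN, hNN', erase_start hb hN']
    calc K ^ (n + 1) ≤ (next a).card * K ^ n := by
          rw [pow_succ']
          exact Nat.mul_le_mul_right _ (hK a ha)
      _ ≤ ∑ b ∈ next a, ((walkSupports next n b).image (insert a)).card := by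
          refine Finset.card_nsmul_le_sum _ _ _ fun b hb => ?_
          rw [Finset.card_image_of_injOn (hinj hb)]
          exact ih (hs a ha b hb)
      _ = (walkSupports next (n + 1) a).card := (Finset.card_biUnion hdisj).symm

end Graded

end WalkSupports

section Translation

variable {d k n : ℕ} {f e : Face d} {M : Finset (Face d)}

theorem translateFace_injective (t : Fin d → ℤ) : Function.Injective (translateFace t) := by
  intro f g hfg
  simpa [translateFace, Prod.ext_iff] using hfg

@[simp]
theorem translateFace_zero : translateFace (0 : Fin d → ℤ) = id := by
  ext1 f
  simp [translateFace]

theorem translateFace_comp (s t : Fin d → ℤ) :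
    translateFace s ∘ translateFace t = translateFace (t + s) := by
  ext1 f
  simp [translateFace, add_assoc]

theorem transEquiv_equivalence (d : ℕ) : Equivalence (TransEquiv (d := d)) where
  refl A := ⟨0, by simp⟩
  symm := by
    rintro A _ ⟨t, rfl⟩
    exact ⟨-t, by simp [Finset.image_image, translateFace_comp]⟩
  trans := by
    rintro A _ _ ⟨s, rfl⟩ ⟨t, rfl⟩
    exact ⟨s + t, by rw [Finset.image_image, translateFace_comp]⟩

theorem mem_faceEdges :
    e ∈ faceEdges f ↔ ∃ i ∈ f.1, e.1 = f.1.erase i ∧ (e.2 = f.2 ∨ e.2 = f.2 + Pi.single i 1) := by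
  simp [faceEdges, Prod.ext_iff, and_or_left]

theorem translateFace_mem_faceEdges_translateFace (t : Fin d → ℤ) :
    translateFace t e ∈ faceEdges (translateFace t f) ↔ e ∈ faceEdges f := by
  simp [mem_faceEdges, translateFace, add_right_comm _ t]

theorem ConnectedFaces.image_translateFace (hM : ConnectedFaces M) (t : Fin d → ℤ) :
    ConnectedFaces (M.image (translateFace t)) := by
  simp only [ConnectedFaces, Finset.forall_mem_image]
  refine fun f hf g hg => (hM f hf g hg).lift (translateFace t) ?_
  rintro a b ⟨ha, hb, hab, e, hea, heb⟩
  exact ⟨Finset.mem_image_of_mem _ ha, Finset.mem_image_of_mem _ hb,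
    (translateFace_injective t).ne hab, translateFace t e,
    (translateFace_mem_faceEdges_translateFace t).2 hea,
    (translateFace_mem_faceEdges_translateFace t).2 heb⟩

theorem IsSAM.image_translateFace (hM : IsSAM d k n M) (t : Fin d → ℤ) :
    IsSAM d k n (M.image (translateFace t)) := by
  obtain ⟨hcard, hdim, hconn, hedge⟩ := hM
  refine ⟨?_, ?_, hconn.image_translateFace t, fun e => ?_⟩
  · rw [Finset.card_image_of_injective _ (translateFace_injective t), hcard]
  · simpa only [Finset.forall_mem_image, translateFace] using hdim
  · obtain ⟨e, rfl⟩ : ∃ e', translateFace t e' = e :=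
      ⟨translateFace (-t) e, by simp [translateFace]⟩
    rw [Finset.filter_image, Finset.card_image_of_injective _ (translateFace_injective t)]
    simpa only [translateFace_mem_faceEdges_translateFace] using hedge e

/-- The translation classes of `(d,k)`-self-avoiding manifolds of `k`-area `n`, whose number is
`samCount d k n`. -/
abbrev SAMClass (d k n : ℕ) :=
  Quot fun A B : {M : Finset (Face d) // IsSAM d k n M} => TransEquiv A.val B.val

theorem SAMClass.mk_eq_mk {A B : {M : Finset (Face d) // IsSAM d k n M}} :
    (Quot.mk _ A : SAMClass d k n) = Quot.mk _ B ↔ TransEquiv A.val B.val :=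
  Quot.eq.trans ((transEquiv_equivalence d).comap Subtype.val).eqvGen_iff

end Translation

section UpperBound

variable {d k n : ℕ} {f g : Face d} {M : Finset (Face d)}

/-- All faces whose base vertex differs from that of `f` by at most one in each coordinate. They
include the faces adjacent to `f`, and are easier to count. -/
noncomputable def nearbyFaces (f : Face d) : Finset (Face d) :=
  Finset.univ ×ˢ Finset.Icc (f.2 - 1) (f.2 + 1)

theorem card_nearbyFaces (f : Face d) : (nearbyFaces f).card = 6 ^ d := by
  have hcoord (i : Fin d) : f.2 i + 1 + 1 - (f.2 i - 1) = 3 := by ring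
  simp [nearbyFaces, Pi.card_Icc, hcoord, ← mul_pow]

theorem mem_nearbyFaces_comm : g ∈ nearbyFaces f ↔ f ∈ nearbyFaces g := by
  simp only [nearbyFaces, Finset.mem_product, Finset.mem_univ, true_and, Finset.mem_Icc,
    sub_le_iff_le_add]
  exact and_comm

theorem base_mem_Icc_of_mem_faceEdges {e : Face d} (he : e ∈ faceEdges f) :
    e.2 ∈ Set.Icc f.2 (f.2 + 1) := by
  obtain ⟨i, -, -, hei | hei⟩ := mem_faceEdges.1 he
  · simp [hei]
  · have hsingle : (Pi.single i 1 : Fin d → ℤ) ≤ 1 := by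
      simp [Pi.single, update_le_iff]
    simp [hei, hsingle]

theorem FaceAdj.mem_nearbyFaces (hfg : FaceAdj f g) : g ∈ nearbyFaces f := by
  obtain ⟨-, e, hef, heg⟩ := hfg
  have hf := base_mem_Icc_of_mem_faceEdges hef
  have hg := base_mem_Icc_of_mem_faceEdges heg
  simp only [nearbyFaces, Finset.mem_product, Finset.mem_univ, true_and, Finset.mem_Icc,
    sub_le_iff_le_add]
  exact ⟨hf.1.trans hg.2, hg.1.trans hf.2⟩

theorem IsSAM.mem_walkSupports_nearbyFaces (hM : IsSAM d k (n + 1) M) (hf : f ∈ M) :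
    M ∈ walkSupports nearbyFaces (2 * n) f := by
  obtain ⟨hcard, -, hconn, -⟩ := hM
  refine mem_walkSupports_of_connected (fun _ _ => mem_nearbyFaces_comm.1) hf ?_ hcard
  exact fun g hg => Relation.ReflTransGen.mono
    (fun _ _ ⟨ha, hb, hab⟩ => ⟨ha, hb, hab.mem_nearbyFaces⟩) _ _ (hconn f hf g hg)

/-- The candidates for a manifold of area `n + 1` that contains a face based at the origin. -/
noncomputable def rootedWalkSupports (d n : ℕ) : Finset (Finset (Face d)) :=
  Finset.univ.biUnion fun S => walkSupports nearbyFaces (2 * n) (S, 0)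

theorem card_rootedWalkSupports_le (d n : ℕ) :
    (rootedWalkSupports d n).card ≤ 2 ^ d * (6 ^ d) ^ (2 * n) := by
  refine (Finset.card_biUnion_le_card_mul _ _ _ fun S _ =>
    card_walkSupports_le (fun f => (card_nearbyFaces f).le) (2 * n) (S, 0)).trans_eq ?_
  simp

theorem SAMClass.exists_mem_rootedWalkSupports (q : SAMClass d k (n + 1)) :
    ∃ A : {M : Finset (Face d) // IsSAM d k (n + 1) M},
      Quot.mk _ A = q ∧ A.val ∈ rootedWalkSupports d n := by
  obtain ⟨⟨M, hM⟩, rfl⟩ := Quot.exists_rep q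
  obtain ⟨f, hf⟩ : M.Nonempty := Finset.card_pos.1 (by rw [hM.1]; omega)
  have hM' := hM.image_translateFace (-f.2)
  have hf' : (f.1, 0) ∈ M.image (translateFace (-f.2)) :=
    Finset.mem_image.2 ⟨f, hf, by simp [translateFace]⟩
  refine ⟨⟨_, hM'⟩, (Quot.sound ⟨-f.2, rfl⟩).symm, Finset.mem_biUnion.2 ?_⟩
  exact ⟨f.1, Finset.mem_univ _, hM'.mem_walkSupports_nearbyFaces hf'⟩

theorem SAMClass.nonempty_embedding_rootedWalkSupports (d k n : ℕ) :
    Nonempty (SAMClass d k (n + 1) ↪ rootedWalkSupports d n) := by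
  choose rep hrep hmem using SAMClass.exists_mem_rootedWalkSupports (d := d) (k := k) (n := n)
  refine ⟨fun q => ⟨(rep q).val, hmem q⟩, fun q q' hqq' => ?_⟩
  have hrep_eq : rep q = rep q' := Subtype.ext (Subtype.mk.inj hqq')
  rw [← hrep q, hrep_eq, hrep q']

instance SAMClass.finite_succ (d k n : ℕ) : Finite (SAMClass d k (n + 1)) :=
  have ⟨code⟩ := SAMClass.nonempty_embedding_rootedWalkSupports d k n
  .of_injective code code.injective

theorem samCount_succ_le (d k n : ℕ) : samCount d k (n + 1) ≤ 2 ^ d * (6 ^ d) ^ (2 * n) := by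
  obtain ⟨code⟩ := SAMClass.nonempty_embedding_rootedWalkSupports d k n
  calc samCount d k (n + 1) ≤ Nat.card (rootedWalkSupports d n) :=
        Nat.card_le_card_of_injective code code.injective
    _ = (rootedWalkSupports d n).card := Nat.card_eq_finsetCard _
    _ ≤ 2 ^ d * (6 ^ d) ^ (2 * n) := card_rootedWalkSupports_le d n

end UpperBound

section Staircases

variable {d k n : ℕ} {f g : Face d} {M : Finset (Face d)}

/-- The sum of the coordinates of the base vertex, which grades the staircases. -/
def faceHeight (f : Face d) : ℤ := ∑ x, f.2 x

theorem faceHeight_translateFace (t : Fin d → ℤ) (f : Face d) :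
    faceHeight (translateFace t f) = faceHeight f + ∑ x, t x :=
  Finset.sum_add_distrib

theorem faceHeight_add_single (S : Finset (Fin d)) (v : Fin d → ℤ) (i : Fin d) :
    faceHeight (S, v + Pi.single i 1) = ∑ x, v x + 1 := by
  simp [faceHeight, Finset.sum_add_distrib]

theorem faceHeight_of_mem_faceEdges {e : Face d} (he : e ∈ faceEdges f) :
    faceHeight f = faceHeight e ∨ faceHeight f = faceHeight e - 1 := by
  obtain ⟨S, v⟩ := e
  obtain ⟨i, -, -, rfl | rfl⟩ := mem_faceEdges.1 he
  · exact .inl rfl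
  · exact .inr (by rw [faceHeight_add_single, add_sub_cancel_right, faceHeight])

/-- The steps of a staircase: the faces that have an upper edge `(S \ {i}, v + e_i)` of
`f = (S, v)` as a lower edge. -/
def ascents (f : Face d) : Finset (Face d) :=
  f.1.biUnion fun i =>
    (f.1.erase i)ᶜ.image fun j => (insert j (f.1.erase i), f.2 + Pi.single i 1)

theorem mem_ascents :
    g ∈ ascents f ↔
      ∃ i ∈ f.1, ∃ j ∉ f.1.erase i, (insert j (f.1.erase i), f.2 + Pi.single i 1) = g := by
  simp only [ascents, Finset.mem_biUnion, Finset.mem_image, Finset.mem_compl]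

theorem card_ascents (f : Face d) : (ascents f).card = f.1.card * (d - f.1.card + 1) := by
  have hdisj : (f.1 : Set (Fin d)).PairwiseDisjoint fun i =>
      (f.1.erase i)ᶜ.image fun j => (insert j (f.1.erase i), f.2 + Pi.single i 1) := by
    refine fun i _ i' _ hii' => Finset.disjoint_left.2 fun g hg hg' => hii' ?_
    obtain ⟨j, -, rfl⟩ := Finset.mem_image.1 hg
    obtain ⟨j', -, hjj'⟩ := Finset.mem_image.1 hg'
    have hsingle : (Pi.single i' 1 : Fin d → ℤ) = Pi.single i 1 :=
      add_left_cancel (congrArg Prod.snd hjj')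
    by_contra hne
    simpa [hne] using congrFun hsingle i
  have hfiber (i) (hi : i ∈ f.1) : ((f.1.erase i)ᶜ.image fun j =>
      ((insert j (f.1.erase i), f.2 + Pi.single i 1) : Face d)).card = d - f.1.card + 1 := by
    have hpos : 0 < f.1.card := Finset.card_pos.2 ⟨i, hi⟩
    have hle : f.1.card ≤ d := card_finset_fin_le f.1
    rw [Finset.card_image_of_injOn, Finset.card_compl, Finset.card_erase_of_mem hi,
      Fintype.card_fin]
    · omega
    · exact fun j hj j' _ hjj' =>
        (Finset.insert_inj (Finset.mem_compl.1 hj)).1 (congrArg Prod.fst hjj')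
  rw [ascents, Finset.card_biUnion hdisj, Finset.sum_const_nat hfiber]

theorem card_fst_of_mem_ascents (hg : g ∈ ascents f) : g.1.card = f.1.card := by
  obtain ⟨i, hi, j, hj, rfl⟩ := mem_ascents.1 hg
  rw [Finset.card_insert_of_notMem hj, Finset.card_erase_add_one hi]

theorem faceHeight_lt_of_mem_ascents (f : Face d) (g : Face d) (hg : g ∈ ascents f) :
    faceHeight f < faceHeight g := by
  obtain ⟨i, -, j, -, rfl⟩ := mem_ascents.1 hg
  rw [faceHeight_add_single]
  exact lt_add_one _

theorem faceAdj_of_mem_ascents (hg : g ∈ ascents f) : FaceAdj f g := by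
  refine ⟨fun hfg => (faceHeight_lt_of_mem_ascents f g hg).ne (congrArg faceHeight hfg), ?_⟩
  obtain ⟨i, hi, j, hj, rfl⟩ := mem_ascents.1 hg
  refine ⟨(f.1.erase i, f.2 + Pi.single i 1), ?_, ?_⟩
  · exact mem_faceEdges.2 ⟨i, hi, rfl, .inr rfl⟩
  · exact mem_faceEdges.2
      ⟨j, Finset.mem_insert_self _ _, (Finset.erase_insert hj).symm, .inl rfl⟩

theorem FaceAdj.symm (hfg : FaceAdj f g) : FaceAdj g f :=
  have ⟨hne, e, hef, heg⟩ := hfg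
  ⟨hne.symm, e, heg, hef⟩

theorem connectedFaces_of_reflTransGen
    (hM : ∀ g ∈ M, Relation.ReflTransGen (fun a b => a ∈ M ∧ b ∈ M ∧ FaceAdj a b) f g) :
    ConnectedFaces M := by
  have : Std.Symm fun a b => a ∈ M ∧ b ∈ M ∧ FaceAdj a b :=
    ⟨fun _ _ ⟨ha, hb, hab⟩ => ⟨hb, ha, hab.symm⟩⟩
  exact fun a ha b hb => (Relation.ReflTransGen.stdSymm.symm _ _ (hM a ha)).trans (hM b hb)

theorem card_filter_mem_faceEdges_le_two (hM : Set.InjOn faceHeight (M : Set (Face d)))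
    (e : Face d) : (M.filter fun f => e ∈ faceEdges f).card ≤ 2 := by
  calc (M.filter fun f => e ∈ faceEdges f).card
      ≤ ({faceHeight e, faceHeight e - 1} : Finset ℤ).card := by
        refine Finset.card_le_card_of_injOn faceHeight (fun f hf => ?_)
          (hM.mono (Finset.filter_subset _ M))
        simpa using faceHeight_of_mem_faceEdges (Finset.mem_filter.1 hf).2
    _ ≤ 2 := Finset.card_le_two

theorem isSAM_of_mem_walkSupports_ascents (hM : M ∈ walkSupports ascents n f) :
    IsSAM d f.1.card (n + 1) M := by
  have hdim : (M : Set (Face d)) ⊆ {g | g.1.card = f.1.card} :=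
    subset_of_mem_walkSupports (fun _ hx _ hy => (card_fst_of_mem_ascents hy).trans hx) rfl hM
  refine ⟨card_of_mem_walkSupports faceHeight_lt_of_mem_ascents hM, fun g hg => hdim hg,
    connectedFaces_of_reflTransGen (f := f) fun g hg => ?_,
    card_filter_mem_faceEdges_le_two (injOn_of_mem_walkSupports faceHeight_lt_of_mem_ascents hM)⟩
  exact Relation.ReflTransGen.mono
    (fun _ _ ⟨ha, hb, hab⟩ => ⟨ha, hb, faceAdj_of_mem_ascents hab⟩) _ _
    (reflTransGen_of_mem_walkSupports hM hg)

/-- Each of the two sets has its lowest face at `f`, so the translation must fix `f`. -/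
theorem TransEquiv.eq_of_mem_walkSupports_ascents {A B : Finset (Face d)} (hAB : TransEquiv A B)
    (hA : A ∈ walkSupports ascents n f) (hB : B ∈ walkSupports ascents n f) : A = B := by
  obtain ⟨t, rfl⟩ := hAB
  have lowest {C : Finset (Face d)} (hC : C ∈ walkSupports ascents n f) {g : Face d} (hg : g ∈ C) :
      g = f ∨ faceHeight f < faceHeight g :=
    eq_or_lt_of_mem_walkSupports faceHeight_lt_of_mem_ascents hC hg
  obtain ⟨g, hg, hgf⟩ := Finset.mem_image.1 (start_mem_of_mem_walkSupports hB)
  have hfix : translateFace t f = f := by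
    obtain rfl | hfg := lowest hA hg
    · exact hgf
    refine (lowest hB (Finset.mem_image_of_mem _ (start_mem_of_mem_walkSupports hA))).resolve_right
      fun hft => ?_
    have hgt := faceHeight_translateFace t g
    rw [hgf] at hgt
    rw [faceHeight_translateFace] at hft
    omega
  obtain rfl : t = 0 := by simpa [translateFace, Prod.ext_iff] using hfix
  simp

theorem pow_le_samCount_succ (hkd : k ≤ d) (n : ℕ) :
    (k * (d - k + 1)) ^ n ≤ samCount d k (n + 1) := by
  obtain ⟨S, -, rfl⟩ : ∃ S ⊆ (Finset.univ : Finset (Fin d)), S.card = k :=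
    Finset.exists_subset_card_eq (by simpa using hkd)
  let f : Face d := (S, 0)
  let toClass (M : walkSupports ascents n f) : SAMClass d S.card (n + 1) :=
    Quot.mk _ ⟨M, isSAM_of_mem_walkSupports_ascents M.2⟩
  have htoClass : Function.Injective toClass := fun A B hAB =>
    Subtype.ext ((SAMClass.mk_eq_mk.1 hAB).eq_of_mem_walkSupports_ascents A.2 B.2)
  calc (S.card * (d - S.card + 1)) ^ n ≤ (walkSupports ascents n f).card :=
        pow_le_card_walkSupports (s := {g | g.1.card = S.card}) faceHeight_lt_of_mem_ascents
          (fun _ hx _ hy => (card_fst_of_mem_ascents hy).trans hx)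
          (fun x hx => by rw [card_ascents, hx]) rfl
    _ = Nat.card (walkSupports ascents n f) := (Nat.card_eq_finsetCard _).symm
    _ ≤ samCount d S.card (n + 1) := Nat.card_le_card_of_injective toClass htoClass

end Staircases

section Growth

theorem tendsto_const_mul_pow_rpow_one_div {c K : ℝ} (hc : 0 < c) (hK : 0 ≤ K) :
    Tendsto (fun n : ℕ => (c * K ^ n) ^ (1 / (n : ℝ))) atTop (nhds K) := by
  have hroot : Tendsto (fun n : ℕ => c ^ (1 / (n : ℝ)) * K) atTop (nhds K) := by
    simpa using ((tendsto_const_nhds (x := c)).rpow tendsto_one_div_atTop_nhds_zero_nat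
      (.inl hc.ne')).mul_const K
  refine hroot.congr' ?_
  filter_upwards [eventually_ne_atTop 0] with n hn
  rw [Real.mul_rpow hc.le (pow_nonneg hK n), one_div, Real.pow_rpow_inv_natCast hK hn]

theorem le_liminf_rpow_one_div {u : ℕ → ℝ} {b c C K : ℝ} (hb : 0 < b) (hc : 0 < c) (hC : 0 ≤ C)
    (hK : 0 ≤ K) (hlower : ∀ᶠ n in atTop, c * K ^ n ≤ u n)
    (hupper : ∀ᶠ n in atTop, u n ≤ b * C ^ n) :
    K ≤ liminf (fun n : ℕ => u n ^ (1 / (n : ℝ))) atTop := by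
  have hlower_lim := tendsto_const_mul_pow_rpow_one_div hc hK
  have hupper_bdd := (tendsto_const_mul_pow_rpow_one_div hb hC).isBoundedUnder_le
  have hnonneg : ∀ᶠ n in atTop, 0 ≤ u n := hlower.mono fun n hn => le_trans (by positivity) hn
  rw [← hlower_lim.liminf_eq]
  refine liminf_le_liminf ?_ hlower_lim.isBoundedUnder_ge
    (hupper_bdd.mono_le ?_).isCoboundedUnder_ge
  · filter_upwards [hlower] with n hn
    exact Real.rpow_le_rpow (by positivity) hn (by positivity)
  · filter_upwards [hnonneg, hupper] with n hn hn'
    exact Real.rpow_le_rpow hn hn' (by positivity)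

end Growth

theorem samCount_liminf_lower_bound (d k : ℕ) (hk : 1 ≤ k) (hkd : k ≤ d) :
    ((k * (d - k + 1) : ℕ) : ℝ) ≤
      liminf (fun n : ℕ => (samCount d k n : ℝ) ^ (1 / (n : ℝ))) atTop := by
  set K := k * (d - k + 1)
  have hK : (0 : ℝ) < K := Nat.cast_pos.2 (Nat.mul_pos hk (Nat.succ_pos _))
  have hlower : ∀ᶠ n in atTop, (K : ℝ)⁻¹ * K ^ n ≤ samCount d k n := by
    filter_upwards [eventually_ge_atTop 1] with n hn
    obtain ⟨m, rfl⟩ := Nat.exists_eq_add_of_le' hn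
    rw [pow_succ', inv_mul_cancel_left₀ hK.ne']
    exact_mod_cast pow_le_samCount_succ hkd m
  have hupper : ∀ᶠ n in atTop, (samCount d k n : ℝ) ≤ 2 ^ d * ((6 ^ d) ^ 2) ^ n := by
    filter_upwards [eventually_ge_atTop 1] with n hn
    obtain ⟨m, rfl⟩ := Nat.exists_eq_add_of_le' hn
    have hexp : (6 ^ d) ^ (2 * m) ≤ ((6 ^ d) ^ 2) ^ (m + 1) := by
      rw [← pow_mul (6 ^ d) 2]
      exact Nat.pow_le_pow_right (by positivity) (by omega)
    exact_mod_cast (samCount_succ_le d k m).trans (Nat.mul_le_mul_left _ hexp)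
  exact le_liminf_rpow_one_div (by positivity) (inv_pos.2 hK) (by positivity) hK.le hlower hupper
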